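/- Fix c̄ > 0, set c = −c̄, and fix an integer N ≥ 1. Let λ_j(δ) = i(c̄/2)(N+1−2j) + iδ_j for j = 1,…,N, and let μ_1,…,μ_N be fixed complex numbers with μ_m² + (c̄²/4)(N−1)² ≠ 0 for all m and μ_k ∉ {i(c̄/2)(N+1−2j) : j = 1,…,N}. Let λ_p, λ_s be fixed admissible auxiliary parameters. Then, as (δ_1,…,δ_N) → 0 in ℂ^N through values for which the expression is defined, F(μ_1,…,μ_N; λ_1(δ),…,λ_N(δ); λ_p,λ_s) → (−1)^N·(c^{2(N−1)}/6)·[P_μ⁴ − 4P_μQ_μ + 3(E_μ + (c̄²/12)N(N²−1))²]·N·[(N−1)!]² / ∏_{m=1}^{N}(μ_m² + (c̄²/4)(N−1)²), where P_μ = Σ_m μ_m, E_μ = Σ_m μ_m², Q_μ = Σ_m μ_m³. -/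

import Mathlib

open Complex Finset Matrix

namespace LL

noncomputable def Kk (c x y : ℂ) : ℂ := 2 * c / ((x - y) ^ 2 + c ^ 2)

noncomputable def Vp {N M : ℕ} (c : ℂ) (μ : Fin N → ℂ) (lam : Fin M → ℂ) (x : ℂ) : ℂ :=
  (∏ m, (μ m - x + I * c)) / ∏ m, (lam m - x + I * c)

noncomputable def Vm {N M : ℕ} (c : ℂ) (μ : Fin N → ℂ) (lam : Fin M → ℂ) (x : ℂ) : ℂ :=
  (∏ m, (μ m - x - I * c)) / ∏ m, (lam m - x - I * c)

noncomputable def Xi {N M : ℕ} (μ : Fin N → ℂ) (lam : Fin M → ℂ) (j : Fin M) : ℂ :=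
  (∏ m, (μ m - lam j)) / ∏ m ∈ Finset.univ.erase j, (lam m - lam j)

noncomputable def Umat {N M : ℕ} (c : ℂ) (μ : Fin N → ℂ) (lam : Fin M → ℂ) (lp ls : ℂ) :
    Matrix (Fin M) (Fin M) ℂ := fun j k =>
  I / (Vp c μ lam (lam j) - Vm c μ lam (lam j)) * Xi μ lam j *
    (Kk c (lam j) (lam k) - Kk c lp (lam k) * Kk c ls (lam j))

noncomputable def U1mat {N M : ℕ} (c : ℂ) (μ : Fin N → ℂ) (lam : Fin M → ℂ) (lp : ℂ) :
    Matrix (Fin M) (Fin M) ℂ := fun j k =>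
  I / (Vp c μ lam (lam j) - Vm c μ lam (lam j)) * Xi μ lam j *
    (Kk c (lam j) (lam k) - Kk c lp (lam k))

noncomputable def U2mat {N M : ℕ} (c : ℂ) (μ : Fin N → ℂ) (lam : Fin M → ℂ) (lp : ℂ) :
    Matrix (Fin M) (Fin M) ℂ := fun j k =>
  U1mat c μ lam lp j k + I / (Vp c μ lam (lam j) - Vm c μ lam (lam j)) * Kk c lp (lam k)

noncomputable def HR {N M : ℕ} (c sc : ℂ) (R : ℕ) (μ : Fin N → ℂ) (lam : Fin M → ℂ)
    (lp ls : ℂ) : ℂ :=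
  (I * sc) ^ R / (c ^ (2 * R - 1) * ((R - 1).factorial : ℂ)) * (-1 : ℂ) ^ (N * (R - 1)) *
    (∏ j, ∏ k, (lam j - lam k + I * c)) *
    (∏ j, ∏ k, (lam j - μ k)⁻¹) *
    (∏ j, (Vp c μ lam (lam j) - Vm c μ lam (lam j))) *
    (1 + Umat c μ lam lp ls).det /
    ((Vp c μ lam lp - Vm c μ lam lp) * (Vp c μ lam ls - Vm c μ lam ls))

noncomputable def Jcal {N : ℕ} (μ lam : Fin N → ℂ) : ℂ :=
  (∑ j, lam j - ∑ j, μ j) ^ 4 -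
    4 * (∑ j, lam j - ∑ j, μ j) * (∑ j, lam j ^ 3 - ∑ j, μ j ^ 3) +
    3 * (∑ j, lam j ^ 2 - ∑ j, μ j ^ 2) ^ 2

noncomputable def Fff {N : ℕ} (c : ℂ) (μ lam : Fin N → ℂ) (lp ls : ℂ) : ℂ :=
  (-1 : ℂ) ^ N * (Jcal μ lam / (6 * c)) *
    (∏ j, ∏ k, (lam j - lam k + I * c)) *
    (∏ j, ∏ k, (lam j - μ k)⁻¹) *
    (∏ j, (Vp c μ lam (lam j) - Vm c μ lam (lam j))) *
    (1 + Umat c μ lam lp ls).det /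
    ((Vp c μ lam lp - Vm c μ lam lp) * (Vp c μ lam ls - Vm c μ lam ls))

noncomputable def Tcal {N M : ℕ} (μ : Fin N → ℂ) (lam : Fin M → ℂ) : ℂ :=
  (1 / 2 : ℂ) * ((∑ j, lam j - ∑ j, μ j) ^ 2 - (∑ j, lam j ^ 2 - ∑ j, μ j ^ 2))

noncomputable def Gff {N M : ℕ} (c sc : ℂ) (μ : Fin N → ℂ) (lam : Fin M → ℂ) (lp ls : ℂ) : ℂ :=
  -I * (Tcal μ lam / (c * sc)) *
    (∏ j, ∏ k, (lam j - lam k + I * c)) *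
    (∏ j, ∏ k, (lam j - μ k)⁻¹) *
    (∏ j, (Vp c μ lam (lam j) - Vm c μ lam (lam j))) *
    (1 + Umat c μ lam lp ls).det /
    ((Vp c μ lam lp - Vm c μ lam lp) * (Vp c μ lam ls - Vm c μ lam ls))

noncomputable def fsc (c x y : ℂ) : ℂ := (x - y + I * c) / (x - y)

noncomputable def stringRap (cb : ℝ) (M : ℕ) (δ : Fin M → ℂ) (j : Fin M) : ℂ :=
  I * ((cb : ℂ) / 2) * ((M : ℂ) - 1 - 2 * (j.val : ℂ)) + I * δ j

end LL

open LL

/-!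
Multiplying row `j` of `1 + U` by `V⁺_j - V⁻_j` gives `diag(V⁺_j - V⁻_j) + A` with
`A_jk = iΞ_j [K(λ_j, λ_k) - K(λ_p, λ_k) K(λ_s, λ_j)]`. The partial fraction expansion of `V^±` reads
`∑_j Ξ_j K(z, λ_j) = i (V⁺ - V⁻)(z)`. Hence the combination of the columns with weights `Ξ_k` is a
multiple of `V⁺_p - V⁻_p`, and once it has replaced the last column, the sum of all rows is a
multiple of `V⁺_s - V⁻_s`; these two factors cancel the denominator of `F`.

Near the string the kernel `K(λ_j, λ_{j+1})` diverges like the inverse of the bond deviation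
`λ_j - λ_{j+1} + ic`, which is also one of the factors in front of the determinant. After replacing
the rows by their partial sums, which agree up to sign with the sums over the complementary rows
apart from a regular term, each of the first `N - 1` rows contains the divergence of a single bond,
so every bond deviation can be absorbed in its row. The last column of the limit matrix vanishes
above its corner, where it is `1`, and the remaining block is upper bidiagonal with diagonal
`Ξ_2, …, Ξ_N`. The remaining prefactor telescopes because `λ_j + ic = λ_{j+1}` on the string.
-/

section General

variable {ι K : Type*} [Field K]

lemma eval_nodal_div_eval_nodal [DecidableEq ι] (s : Finset ι) (a : ι → K) {v : ι → K}
    (hv : Set.InjOn v s) {x : K} (hx : ∀ i ∈ s, x ≠ v i) :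
    (Lagrange.nodal s a).eval x / (Lagrange.nodal s v).eval x =
      1 + ∑ i ∈ s, Lagrange.nodalWeight s v i * (x - v i)⁻¹ * (Lagrange.nodal s a).eval (v i) := by
  have hdegree : (Lagrange.nodal s a - Lagrange.nodal s v).degree < #s := by
    rw [← Lagrange.degree_nodal (v := a)]
    exact Polynomial.degree_sub_lt_left (by simp only [Lagrange.degree_nodal])
      Lagrange.nodal_ne_zero (by simp only [Lagrange.nodal_monic.leadingCoeff])
  have hinterp := congrArg (Polynomial.eval x) (Lagrange.eq_interpolate hv hdegree)
  rw [Lagrange.eval_interpolate_not_at_node _ hx] at hinterp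
  have hvals : ∀ i ∈ s, (Lagrange.nodal s a - Lagrange.nodal s v).eval (v i) =
      (Lagrange.nodal s a).eval (v i) := fun i hi ↦ by
    rw [Polynomial.eval_sub, Lagrange.eval_nodal_at_node hi, sub_zero]
  rw [div_eq_iff (Lagrange.eval_nodal_not_at_node hx), add_mul, one_mul, mul_comm (Finset.sum _ _),
    ← sub_eq_iff_eq_add', ← Polynomial.eval_sub, hinterp]
  exact congrArg _ (sum_congr rfl fun i hi ↦ by rw [hvals i hi])

lemma prod_sub_div_prod_sub [Fintype ι] [DecidableEq ι] (a : ι → K) {v : ι → K}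
    (hv : Function.Injective v) {x : K} (hx : ∀ i, v i ≠ x) :
    (∏ i, (a i - x)) / ∏ i, (v i - x) =
      1 + ∑ j, (∏ i, (a i - v j)) / (∏ i ∈ univ.erase j, (v i - v j)) / (v j - x) := by
  have h := eval_nodal_div_eval_nodal univ (-a) (v := -v) (x := -x)
    (neg_injective.comp hv).injOn fun i _ ↦ by simpa using (hx i).symm
  simp only [Lagrange.eval_nodal, Lagrange.nodalWeight, prod_inv_distrib, Pi.neg_apply,
    neg_sub_neg] at h
  rw [h]
  exact congrArg _ (sum_congr rfl fun j _ ↦ by rw [div_div, div_eq_inv_mul, mul_inv])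

end General

section Determinants

variable {R : Type*} [CommRing R] {n : ℕ}

lemma det_partialSum_rows (M : Matrix (Fin (n + 1)) (Fin (n + 1)) R) :
    (of fun j k ↦ ∑ i ∈ Iic j, M i k).det = M.det := by
  refine det_eq_of_forall_row_eq_smul_add_pred 1 (fun k ↦ ?_) fun i k ↦ ?_
  · have : Iic (0 : Fin (n + 1)) = {0} := by ext i; simp
    simp [this]
  · have : Iic i.succ = insert i.succ (Iic i.castSucc) := by
      ext j; simp [Fin.le_def, Fin.ext_iff]; omega
    simp [this]

lemma mul_det_snoc_partialSum_rows (M : Matrix (Fin (n + 1)) (Fin (n + 1)) R) (g : Fin n → R)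
    {d : R} {r : Fin (n + 1) → R} (hr : ∀ k, ∑ i, M i k = d * r k) :
    d * (of (Fin.snoc (fun j k ↦ g j * ∑ i ∈ Iic j.castSucc, M i k) r)).det =
      (∏ j, g j) * M.det := by
  set A : Fin n → Fin (n + 1) → R := fun j k ↦ g j * ∑ i ∈ Iic j.castSucc, M i k
  have hscale : updateRow (of (Fin.snoc A r)) (Fin.last n) (d • r) =
      of fun j k ↦ (Fin.snoc g 1 : Fin (n + 1) → R) j * (of fun j k ↦ ∑ i ∈ Iic j, M i k) j k := by
    ext j k
    induction j using Fin.lastCases with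
    | last => simp [← hr, show Iic (Fin.last n) = univ from Iic_top]
    | cast j => simp [A, (Fin.castSucc_lt_last j).ne]
  have hupdate : updateRow (of (Fin.snoc A r)) (Fin.last n) r = of (Fin.snoc A r) :=
    Fin.update_snoc_last (α := fun _ ↦ Fin (n + 1) → R) r A r
  calc d * (of (Fin.snoc A r)).det
      = (updateRow (of (Fin.snoc A r)) (Fin.last n) (d • r)).det := by
        rw [det_updateRow_smul, hupdate]
    _ = (∏ j, g j) * M.det := by
        rw [hscale, det_mul_column, det_partialSum_rows, Fin.prod_snoc, mul_one]

lemma det_of_last_column_eq_zero (A : Matrix (Fin (n + 1)) (Fin (n + 1)) R)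
    (hA : ∀ j : Fin n, A j.castSucc (Fin.last n) = 0) :
    A.det = A (Fin.last n) (Fin.last n) * (A.submatrix Fin.castSucc Fin.castSucc).det := by
  rw [det_succ_column A (Fin.last n), Fin.sum_univ_castSucc,
    sum_eq_zero fun j _ ↦ by rw [hA, mul_zero, zero_mul], zero_add, ← two_mul,
    Even.neg_one_pow (even_two_mul _), one_mul, Fin.succAbove_last]

lemma prod_natCast_sub_val : ∏ k : Fin n, ((n : R) - (k : ℕ)) = n.factorial := by
  induction n with
  | zero => simp
  | succ n ih =>
    rw [Fin.prod_univ_succ, Nat.factorial_succ, Nat.cast_mul, ← ih]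
    simp

end Determinants

section Topology

lemma eventually_nhds_injective {ι X : Type*} [Finite ι] [TopologicalSpace X] [T2Space X]
    {w : ι → X} (hw : Function.Injective w) : ∀ᶠ v in nhds w, Function.Injective v := by
  simp only [Function.Injective, Filter.eventually_all]
  intro i j
  obtain rfl | hij := eq_or_ne i j
  · exact .of_forall fun _ _ ↦ rfl
  · have hne := ((continuousAt_apply i w).ne_iff_eventually_ne (continuousAt_apply j w)).1
      (hw.ne hij)
    exact hne.mono fun _ hv heq ↦ (hv heq).elim

end Topology

namespace LL

section Identity

lemma Kk_symm (c x y : ℂ) : Kk c x y = Kk c y x := by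
  rw [Kk, Kk, sub_sq_comm]

lemma sub_sq_add_sq (c x y : ℂ) :
    (x - y) ^ 2 + c ^ 2 = (y - x + I * c) * (y - x - I * c) := by
  linear_combination c ^ 2 * I_sq

lemma Xi_eq_neg_div {N : ℕ} (μ lam : Fin N → ℂ) (j : Fin N) :
    Xi μ lam j = -((∏ m, (lam j - μ m)) / ∏ m ∈ univ.erase j, (lam j - lam m)) := by
  rw [Xi, ← mul_prod_erase univ _ (mem_univ j), ← mul_prod_erase univ _ (mem_univ j),
    mul_div_assoc, mul_div_assoc, ← prod_div_distrib, ← prod_div_distrib, ← neg_mul, neg_sub]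
  exact congrArg _ (prod_congr rfl fun m _ ↦ by
    rw [← neg_sub (lam j), ← neg_sub (lam j), neg_div_neg_eq])

lemma Xi_ne_zero {N : ℕ} {μ lam : Fin N → ℂ} (hlam : Function.Injective lam)
    (hμ : ∀ k j, μ k ≠ lam j) (j : Fin N) : Xi μ lam j ≠ 0 :=
  div_ne_zero (prod_ne_zero_iff.2 fun _ _ ↦ sub_ne_zero.2 (hμ _ _))
    (prod_ne_zero_iff.2 fun _ hm ↦ sub_ne_zero.2 (hlam.ne (ne_of_mem_erase hm)))

lemma sum_Xi_mul_Kk {N : ℕ} (c : ℂ) (μ : Fin N → ℂ) {lam : Fin N → ℂ}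
    (hlam : Function.Injective lam) {z : ℂ} (hz : ∀ j, (z - lam j) ^ 2 + c ^ 2 ≠ 0) :
    ∑ j, Xi μ lam j * Kk c z (lam j) = I * (Vp c μ lam z - Vm c μ lam z) := by
  simp only [sub_sq_add_sq, mul_ne_zero_iff] at hz
  have hVp : Vp c μ lam z = 1 + ∑ j, Xi μ lam j / (lam j - z + I * c) := by
    have h := prod_sub_div_prod_sub μ hlam (x := z - I * c)
      fun j hj ↦ (hz j).1 (by rw [hj]; ring)
    simpa only [Vp, ← sub_add, ← Xi.eq_def] using h
  have hVm : Vm c μ lam z = 1 + ∑ j, Xi μ lam j / (lam j - z - I * c) := by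
    have h := prod_sub_div_prod_sub μ hlam (x := z + I * c)
      fun j hj ↦ (hz j).2 (by rw [hj]; ring)
    simpa only [Vm, ← sub_sub, ← Xi.eq_def] using h
  rw [hVp, hVm, add_sub_add_left_eq_sub, ← sum_sub_distrib, mul_sum]
  refine sum_congr rfl fun j _ ↦ ?_
  rw [Kk, sub_sq_add_sq, div_sub_div _ _ (hz j).1 (hz j).2, mul_div_assoc', mul_div_assoc']
  congr 1
  linear_combination 2 * c * Xi μ lam j * I_sq

variable {n : ℕ} (c : ℂ) (μ lam : Fin (n + 1) → ℂ) (lp ls : ℂ)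

/-- The kernel part of the matrix `diag(V⁺_j - V⁻_j) (1 + U)`: the entry `(j, k)` is
`(V⁺_j - V⁻_j) U_jk`. -/
noncomputable def kernelMat : Matrix (Fin (n + 1)) (Fin (n + 1)) ℂ :=
  of fun j k ↦ I * Xi μ lam j * (Kk c (lam j) (lam k) - Kk c lp (lam k) * Kk c ls (lam j))

/-- The matrix `diag(V⁺_j - V⁻_j) (1 + U)`, written without denominators `V⁺_j - V⁻_j`. -/
noncomputable def scaledMat : Matrix (Fin (n + 1)) (Fin (n + 1)) ℂ :=
  diagonal (fun j ↦ Vp c μ lam (lam j) - Vm c μ lam (lam j)) + kernelMat c μ lam lp ls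

/-- The deviation of the bond between the consecutive rapidities `j` and `j + 1`; it vanishes
on an exact string. -/
noncomputable def gap (j : Fin n) : ℂ := lam j.castSucc - lam j.succ + I * c

/-- `scaledMat` with its last column replaced by the combination of columns with weights `Xi`,
up to the factor `V⁺_p - V⁻_p`. -/
noncomputable def borderedMat : Matrix (Fin (n + 1)) (Fin (n + 1)) ℂ :=
  (scaledMat c μ lam lp ls).updateCol (Fin.last n) fun j ↦ Xi μ lam j * Kk c ls (lam j)

/-- The last row of `reducedMat`: the sum of the rows of `borderedMat`, up to the factor
`I (V⁺_s - V⁻_s)`. -/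
noncomputable def lastRow : Fin (n + 1) → ℂ :=
  Function.update (fun k ↦ -I * Kk c lp (lam k)) (Fin.last n) 1

/-- The matrix carrying the determinant in the string limit: the partial row sums of `borderedMat`,
each multiplied by the bond deviation that compensates its divergence, above `lastRow`. -/
noncomputable def reducedMat : Matrix (Fin (n + 1)) (Fin (n + 1)) ℂ :=
  of (Fin.snoc (fun j k ↦ gap c lam j * ∑ i ∈ Iic j.castSucc, borderedMat c μ lam lp ls i k)
    (lastRow c lam lp))

variable {c μ lam lp ls}

lemma borderedMat_last (j : Fin (n + 1)) :
    borderedMat c μ lam lp ls j (Fin.last n) = Xi μ lam j * Kk c ls (lam j) :=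
  updateCol_self

lemma borderedMat_of_ne {j k : Fin (n + 1)} (hjk : j ≠ k) (hk : k ≠ Fin.last n) :
    borderedMat c μ lam lp ls j k = kernelMat c μ lam lp ls j k := by
  rw [borderedMat, updateCol_ne hk, scaledMat, Matrix.add_apply, diagonal_apply_ne _ hjk, zero_add]

lemma lastRow_last : lastRow c lam lp (Fin.last n) = 1 := Function.update_self ..

lemma lastRow_of_ne {k : Fin (n + 1)} (hk : k ≠ Fin.last n) :
    lastRow c lam lp k = -I * Kk c lp (lam k) := Function.update_of_ne hk ..

lemma det_scaledMat (hV : ∀ j, Vp c μ lam (lam j) ≠ Vm c μ lam (lam j)) :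
    (scaledMat c μ lam lp ls).det = (∏ j, (Vp c μ lam (lam j) - Vm c μ lam (lam j))) *
      (1 + Umat c μ lam lp ls).det := by
  rw [← det_mul_column]
  congr 1
  ext j k
  have hVj := sub_ne_zero.2 (hV j)
  simp only [scaledMat, kernelMat, Umat, of_apply, Matrix.add_apply, diagonal_apply, one_apply]
  rw [mul_add, mul_ite, mul_one, mul_zero, mul_assoc (I / _), ← mul_assoc _ (I / _),
    mul_div_cancel₀ _ hVj, ← mul_assoc]

section

variable (hlam : Function.Injective lam) (hself : ∀ j k, (lam j - lam k) ^ 2 + c ^ 2 ≠ 0)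
include hlam hself

lemma sum_scaledMat_apply (k : Fin (n + 1)) :
    ∑ j, scaledMat c μ lam lp ls j k =
      -I * Kk c lp (lam k) * ∑ j, Xi μ lam j * Kk c ls (lam j) := by
  have hk := sum_Xi_mul_Kk c μ hlam (hself k)
  have hkernel : ∑ j, kernelMat c μ lam lp ls j k = I * ∑ j, Xi μ lam j * Kk c (lam k) (lam j) -
      I * Kk c lp (lam k) * ∑ j, Xi μ lam j * Kk c ls (lam j) := by
    simp only [mul_sum, ← sum_sub_distrib]
    exact sum_congr rfl fun j _ ↦ by rw [kernelMat, of_apply, Kk_symm c (lam k)]; ring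
  simp only [scaledMat, Matrix.add_apply, sum_add_distrib, diagonal_apply, sum_ite_eq', mem_univ,
    if_true]
  rw [hkernel, hk]
  linear_combination (Vp c μ lam (lam k) - Vm c μ lam (lam k)) * I_sq

lemma sum_Xi_mul_scaledMat (hp : ∀ j, (lp - lam j) ^ 2 + c ^ 2 ≠ 0) (j : Fin (n + 1)) :
    ∑ k, Xi μ lam k * scaledMat c μ lam lp ls j k =
      (Vp c μ lam lp - Vm c μ lam lp) * (Xi μ lam j * Kk c ls (lam j)) := by
  have hj := sum_Xi_mul_Kk c μ hlam (hself j)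
  have hlp := sum_Xi_mul_Kk c μ hlam hp
  have hkernel : ∑ k, Xi μ lam k * kernelMat c μ lam lp ls j k =
      I * Xi μ lam j * ∑ k, Xi μ lam k * Kk c (lam j) (lam k) -
      I * Xi μ lam j * Kk c ls (lam j) * ∑ k, Xi μ lam k * Kk c lp (lam k) := by
    simp only [mul_sum, ← sum_sub_distrib]
    exact sum_congr rfl fun k _ ↦ by rw [kernelMat, of_apply]; ring
  simp only [scaledMat, Matrix.add_apply, mul_add, sum_add_distrib, diagonal_apply, mul_ite,
    mul_zero, sum_ite_eq, mem_univ, if_true]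
  rw [hkernel, hj, hlp]
  linear_combination Xi μ lam j * (Vp c μ lam (lam j) - Vm c μ lam (lam j) -
    Kk c ls (lam j) * (Vp c μ lam lp - Vm c μ lam lp)) * I_sq

lemma Xi_mul_det_scaledMat (hp : ∀ j, (lp - lam j) ^ 2 + c ^ 2 ≠ 0) :
    Xi μ lam (Fin.last n) * (scaledMat c μ lam lp ls).det =
      (Vp c μ lam lp - Vm c μ lam lp) * (borderedMat c μ lam lp ls).det := by
  rw [← smul_eq_mul, ← det_updateCol_sum, borderedMat, ← det_updateCol_smul]
  simp only [smul_eq_mul, sum_Xi_mul_scaledMat hlam hself hp]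
  rfl

lemma sum_borderedMat_apply (k : Fin (n + 1)) :
    ∑ j, borderedMat c μ lam lp ls j k =
      (∑ j, Xi μ lam j * Kk c ls (lam j)) * lastRow c lam lp k := by
  obtain rfl | hk := eq_or_ne k (Fin.last n)
  · simp only [borderedMat_last, lastRow_last, mul_one]
  · simp only [borderedMat, updateCol_ne hk, lastRow_of_ne hk,
      sum_scaledMat_apply hlam hself, mul_comm]

lemma prod_gap_mul_Xi_mul_det (hp : ∀ j, (lp - lam j) ^ 2 + c ^ 2 ≠ 0)
    (hs : ∀ j, (ls - lam j) ^ 2 + c ^ 2 ≠ 0)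
    (hV : ∀ j, Vp c μ lam (lam j) ≠ Vm c μ lam (lam j)) :
    (∏ j, gap c lam j) * Xi μ lam (Fin.last n) *
        ((∏ j, (Vp c μ lam (lam j) - Vm c μ lam (lam j))) * (1 + Umat c μ lam lp ls).det) =
      I * (Vp c μ lam lp - Vm c μ lam lp) * (Vp c μ lam ls - Vm c μ lam ls) *
        (reducedMat c μ lam lp ls).det := by
  have hcol := Xi_mul_det_scaledMat (μ := μ) (ls := ls) hlam hself hp
  have hrow := mul_det_snoc_partialSum_rows _ (gap c lam)
    (sum_borderedMat_apply (μ := μ) (ls := ls) (lp := lp) hlam hself)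
  rw [sum_Xi_mul_Kk c μ hlam hs] at hrow
  rw [← det_scaledMat hV, mul_assoc, hcol, reducedMat]
  linear_combination -(Vp c μ lam lp - Vm c μ lam lp) * hrow

end

end Identity

section Regularization

variable {n : ℕ} (c : ℂ) (μ lam : Fin (n + 1) → ℂ)

/-- The product of the factors `λ_j - λ_k + ic` of `Fff` other than the bond deviations. -/
noncomputable def offBondProd : ℂ :=
  (∏ j : Fin n, ∏ k ∈ univ.erase j.succ, (lam j.castSucc - lam k + I * c)) *
    ∏ k, (lam (Fin.last n) - lam k + I * c)

/-- The scalar prefactor left in `Fff`, apart from the one with `Jcal`, once the determinant is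
expressed by `reducedMat`; it is finite on an exact string. -/
noncomputable def regularFactor : ℂ :=
  offBondProd c lam * (∏ j, ∏ k, (lam j - μ k)⁻¹) * I / Xi μ lam (Fin.last n)

lemma prod_gap_mul_offBondProd :
    (∏ j, gap c lam j) * offBondProd c lam = ∏ j, ∏ k, (lam j - lam k + I * c) := by
  have hrow (j : Fin n) : gap c lam j * ∏ k ∈ univ.erase j.succ, (lam j.castSucc - lam k + I * c) =
      ∏ k, (lam j.castSucc - lam k + I * c) :=
    mul_prod_erase univ (fun k ↦ lam j.castSucc - lam k + I * c) (mem_univ j.succ)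
  rw [offBondProd, ← mul_assoc, ← prod_mul_distrib,
    Fin.prod_univ_castSucc fun j ↦ ∏ k, (lam j - lam k + I * c)]
  simp only [hrow]

variable {c μ lam} {lp ls : ℂ}

lemma Fff_eq_regularFactor_mul_det (hlam : Function.Injective lam) (hμ : ∀ k j, μ k ≠ lam j)
    (hself : ∀ j k, (lam j - lam k) ^ 2 + c ^ 2 ≠ 0) (hp : ∀ j, (lp - lam j) ^ 2 + c ^ 2 ≠ 0)
    (hs : ∀ j, (ls - lam j) ^ 2 + c ^ 2 ≠ 0)
    (hV : ∀ j, Vp c μ lam (lam j) ≠ Vm c μ lam (lam j))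
    (hVp : Vp c μ lam lp ≠ Vm c μ lam lp) (hVs : Vp c μ lam ls ≠ Vm c μ lam ls) :
    Fff c μ lam lp ls = (-1) ^ (n + 1) * (Jcal μ lam / (6 * c)) * regularFactor c μ lam *
      (reducedMat c μ lam lp ls).det := by
  have hdet := prod_gap_mul_Xi_mul_det hlam hself hp hs hV
  rw [mul_right_comm, ← eq_div_iff (Xi_ne_zero hlam hμ (Fin.last n))] at hdet
  rw [Fff, regularFactor, ← prod_gap_mul_offBondProd,
    div_eq_iff (mul_ne_zero (sub_ne_zero.2 hVp) (sub_ne_zero.2 hVs))]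
  linear_combination (-1) ^ (n + 1) * (Jcal μ lam / (6 * c)) * offBondProd c lam *
    (∏ j, ∏ k, (lam j - μ k)⁻¹) * hdet

end Regularization

section IdealString

/-- The exact `N`-string centred at `z`: the points `z + ic(j - (N - 1)/2)`, indexed from
`j = 0`. -/
noncomputable def idealString {N : ℕ} (c z : ℂ) (j : Fin N) : ℂ :=
  z + I * c * (j - (N - 1) / 2)

lemma stringRap_zero (cb : ℝ) (N : ℕ) : stringRap cb N 0 = idealString (-(cb : ℂ)) 0 := by
  ext j
  simp only [stringRap, idealString, Pi.zero_apply]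
  ring

lemma tendsto_stringRap (cb : ℝ) (N : ℕ) (s : Set (Fin N → ℂ)) :
    Filter.Tendsto (stringRap cb N) (nhdsWithin 0 s) (nhds (idealString (-(cb : ℂ)) 0)) := by
  have hcont : Continuous (stringRap cb N) := by unfold stringRap; fun_prop
  exact stringRap_zero cb N ▸ (hcont.tendsto 0).mono_left nhdsWithin_le_nhds

lemma idealString_sub {N : ℕ} (c z : ℂ) (j k : Fin N) :
    idealString c z j - idealString c z k = I * c * ((j : ℂ) - k) := by
  rw [idealString, idealString]
  ring

lemma idealString_injective {N : ℕ} {c : ℂ} (hc : c ≠ 0) (z : ℂ) :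
    Function.Injective (idealString (N := N) c z) := fun j k h ↦ by
  rw [← sub_eq_zero, idealString_sub] at h
  simpa [hc, sub_eq_zero, Fin.ext_iff] using h

lemma idealString_kernel_ne_zero {N : ℕ} {c : ℂ} (hc : c ≠ 0) (z : ℂ) {j k : Fin N}
    (h₁ : (j : ℕ) + 1 ≠ k) (h₂ : (k : ℕ) + 1 ≠ j) :
    (idealString c z j - idealString c z k) ^ 2 + c ^ 2 ≠ 0 := by
  have hfactor : (idealString c z j - idealString c z k) ^ 2 + c ^ 2 =
      c ^ 2 * (((k + 1 : ℕ) : ℂ) - j) * (((j + 1 : ℕ) : ℂ) - k) := by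
    rw [idealString_sub]
    push_cast
    linear_combination c ^ 2 * ((j : ℂ) - k) ^ 2 * I_sq
  rw [hfactor]
  exact mul_ne_zero (mul_ne_zero (pow_ne_zero 2 hc) (sub_ne_zero.2 (mod_cast h₂)))
    (sub_ne_zero.2 (mod_cast h₁))

lemma gap_idealString {n : ℕ} (c z : ℂ) (j : Fin n) : gap c (idealString c z) j = 0 := by
  rw [gap, idealString_sub, Fin.val_castSucc, Fin.val_succ]
  push_cast
  ring

lemma prod_idealString_last_sub_add {n : ℕ} (c z : ℂ) :
    ∏ k : Fin (n + 1), (idealString c z (Fin.last n) - idealString c z k + I * c) =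
      (I * c) ^ (n + 1) * (n + 1).factorial := by
  rw [← prod_natCast_sub_val, ← Fin.prod_const, ← prod_mul_distrib]
  exact prod_congr rfl fun k _ ↦ by rw [idealString_sub, Fin.val_last]; push_cast; ring

lemma prod_erase_idealString_last_sub {n : ℕ} (c z : ℂ) :
    ∏ k ∈ univ.erase (Fin.last n), (idealString c z (Fin.last n) - idealString c z k) =
      (I * c) ^ n * n.factorial := by
  rw [← compl_singleton, ← Fin.image_castSucc,
    prod_image (Fin.castSucc_injective n).injOn, ← prod_natCast_sub_val, ← Fin.prod_const,
    ← prod_mul_distrib]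
  exact prod_congr rfl fun k _ ↦ by rw [idealString_sub, Fin.val_last, Fin.val_castSucc]

lemma prod_sub_mul_prod_sub_idealString {n : ℕ} (c z : ℂ) (μ : Fin (n + 1) → ℂ) :
    (∏ m, (idealString c z (0 : Fin (n + 1)) - μ m)) *
        ∏ m, (idealString c z (Fin.last n) - μ m) =
      ∏ m, ((μ m - z) ^ 2 + c ^ 2 / 4 * n ^ 2) := by
  rw [← prod_mul_distrib]
  refine prod_congr rfl fun m _ ↦ ?_
  simp only [idealString, Fin.val_zero, Fin.val_last, Nat.cast_zero, Nat.cast_succ]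
  linear_combination -(c ^ 2 / 4 * (n : ℂ) ^ 2) * I_sq

/-- Since `λ_j + ic = λ_{j+1}` on the exact string, the factors of row `j` are those of the
denominator of `Xi` at `j + 1`. -/
lemma prod_erase_idealString_mul_Xi {n : ℕ} {c : ℂ} (hc : c ≠ 0) (z : ℂ) (μ : Fin (n + 1) → ℂ)
    (j : Fin n) :
    (∏ k ∈ univ.erase j.succ, (idealString c z j.castSucc - idealString c z k + I * c)) *
        Xi μ (idealString c z) j.succ = -∏ m, (idealString c z j.succ - μ m) := by
  have hshift (k : Fin (n + 1)) : idealString c z j.castSucc - idealString c z k + I * c =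
      idealString c z j.succ - idealString c z k := by
    have hbond := gap_idealString c z j
    rw [gap] at hbond
    linear_combination hbond
  have hne : ∏ k ∈ univ.erase j.succ, (idealString c z j.succ - idealString c z k) ≠ 0 :=
    prod_ne_zero_iff.2 fun k hk ↦
      sub_ne_zero.2 ((idealString_injective hc z).ne (ne_of_mem_erase hk).symm)
  rw [Xi_eq_neg_div, prod_congr rfl fun k _ ↦ hshift k, mul_neg, mul_div_cancel₀ _ hne]

lemma prod_prod_erase_idealString_mul_prod_Xi {n : ℕ} {c : ℂ} (hc : c ≠ 0) (z : ℂ)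
    (μ : Fin (n + 1) → ℂ) :
    (∏ j : Fin n, ∏ k ∈ univ.erase j.succ,
        (idealString c z j.castSucc - idealString c z k + I * c)) *
        ∏ j : Fin n, Xi μ (idealString c z) j.succ =
      (-1) ^ n * ∏ j : Fin n, ∏ m, (idealString c z j.succ - μ m) := by
  rw [← prod_mul_distrib, ← Fin.prod_const, ← prod_mul_distrib]
  exact prod_congr rfl fun j _ ↦ by rw [prod_erase_idealString_mul_Xi hc, neg_one_mul]

lemma Xi_idealString_last {n : ℕ} (c z : ℂ) (μ : Fin (n + 1) → ℂ) :
    Xi μ (idealString c z) (Fin.last n) =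
      -((∏ m, (idealString c z (Fin.last n) - μ m)) / ((I * c) ^ n * n.factorial)) := by
  rw [Xi_eq_neg_div, prod_erase_idealString_last_sub]

lemma regularFactor_idealString {n : ℕ} {c z : ℂ} (hc : c ≠ 0) {μ : Fin (n + 1) → ℂ}
    (hμ : ∀ k j : Fin (n + 1), μ k ≠ idealString c z j) :
    regularFactor c μ (idealString c z) * ∏ j : Fin n, Xi μ (idealString c z) j.succ =
      c ^ (2 * n + 1) * (n + 1) * (n.factorial : ℂ) ^ 2 /
        ∏ m, ((μ m - z) ^ 2 + c ^ 2 / 4 * n ^ 2) := by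
  have hP : ∀ j, ∏ m, (idealString c z j - μ m) ≠ 0 := fun j ↦
    prod_ne_zero_iff.2 fun m _ ↦ sub_ne_zero.2 (hμ m j).symm
  have hbonds := prod_prod_erase_idealString_mul_prod_Xi hc z μ
  have hlastXi := Xi_idealString_last c z μ
  have hends := prod_sub_mul_prod_sub_idealString c z μ
  set L : Fin (n + 1) → ℂ := idealString c z
  have hsign : (-1 : ℂ) ^ n * I * (I * c) ^ (2 * n + 1) = -c ^ (2 * n + 1) := by
    have hone : ((-1 : ℂ) ^ n) ^ 2 = 1 := by rw [← pow_mul, mul_comm, pow_mul, neg_one_sq, one_pow]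
    rw [mul_pow, pow_succ I, pow_mul, I_sq]
    linear_combination ((-1) ^ n) ^ 2 * c ^ (2 * n + 1) * I_sq - c ^ (2 * n + 1) * hone
  rw [regularFactor, offBondProd, prod_idealString_last_sub_add, hlastXi, ← hends]
  simp only [prod_inv_distrib]
  rw [Fin.prod_univ_succ (fun j ↦ ∏ m, (L j - μ m))]
  have hfirst := hP 0
  have hlast := hP (Fin.last n)
  have htail : ∏ j : Fin n, ∏ m, (L j.succ - μ m) ≠ 0 := prod_ne_zero_iff.2 fun j _ ↦ hP j.succ
  rw [Nat.factorial_succ]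
  push_cast
  field_simp
  linear_combination -(I * n.factorial ^ 2 * (I * c) ^ (2 * n + 1)) * hbonds -
    n.factorial ^ 2 * (∏ j : Fin n, ∏ m, (L j.succ - μ m)) * hsign

end IdealString

section LimitMatrix

variable {n : ℕ} (c z : ℂ) (μ : Fin (n + 1) → ℂ) (lp : ℂ)

/-- The limit of `reducedMat` at the exact string: upper bidiagonal apart from its last row, with
zero last column above the corner. -/
noncomputable def limitMat : Matrix (Fin (n + 1)) (Fin (n + 1)) ℂ :=
  of (Fin.snoc (fun (j : Fin n) k ↦
      if k = Fin.last n then 0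
      else if k = j.castSucc then Xi μ (idealString c z) j.succ
      else if k = j.succ then -Xi μ (idealString c z) j.castSucc
      else 0)
    (lastRow c (idealString c z) lp))

lemma det_limitMat :
    (limitMat c z μ lp).det = ∏ j : Fin n, Xi μ (idealString c z) j.succ := by
  have hcolumn (j : Fin n) : limitMat c z μ lp j.castSucc (Fin.last n) = 0 := by
    rw [limitMat, of_apply, Fin.snoc_castSucc, if_pos rfl]
  have hcorner : limitMat c z μ lp (Fin.last n) (Fin.last n) = 1 := by
    rw [limitMat, of_apply, Fin.snoc_last, lastRow_last]
  have hblock (j k : Fin n) : (limitMat c z μ lp).submatrix Fin.castSucc Fin.castSucc j k =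
      if k = j then Xi μ (idealString c z) j.succ
      else if k.castSucc = j.succ then -Xi μ (idealString c z) j.castSucc else 0 := by
    simp [limitMat, k.castSucc_lt_last.ne]
  have htriangular : ((limitMat c z μ lp).submatrix Fin.castSucc Fin.castSucc).IsUpperTriangular :=
    fun j k (hkj : k < j) ↦ by rw [hblock, if_neg hkj.ne, if_neg (by grind)]
  rw [det_of_last_column_eq_zero _ hcolumn, hcorner, one_mul, det_of_isUpperTriangular htriangular]
  exact prod_congr rfl fun j _ ↦ by rw [hblock, if_pos rfl]

end LimitMatrix

section PowerSums

variable {N : ℕ} (c z : ℂ)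

lemma sum_idealString_pow_of_odd {p : ℕ} (hp : Odd p) :
    ∑ j : Fin N, idealString c 0 j ^ p = 0 := by
  have hrev (j : Fin N) : idealString c 0 j.rev = -idealString c 0 j := by
    rw [idealString, idealString, Fin.val_rev, Nat.cast_sub j.is_lt]
    push_cast
    ring
  rw [← self_eq_neg, ← sum_neg_distrib, ← Equiv.sum_comp Fin.revPerm]
  exact sum_congr rfl fun j _ ↦ by rw [Fin.revPerm_apply, hrev, hp.neg_pow]

lemma sum_idealString_sq :
    ∑ j : Fin N, idealString c 0 j ^ 2 = -(c ^ 2 / 12 * N * ((N : ℂ) ^ 2 - 1)) := by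
  have hsum (a : ℂ) : ∑ j : Fin N, ((j : ℂ) - a) ^ 2 =
      N * (a ^ 2 - a * (N - 1) + (N - 1) * (2 * N - 1) / 6) := by
    induction N with
    | zero => simp
    | succ N ih =>
      rw [Fin.sum_univ_castSucc]
      simp only [Fin.val_castSucc, Fin.val_last, ih]
      push_cast
      ring
  simp only [idealString, zero_add, mul_pow, ← mul_sum, hsum, I_sq]
  ring

lemma Jcal_sub_const (μ lam : Fin N → ℂ) :
    Jcal (fun j ↦ μ j - z) (fun j ↦ lam j - z) = Jcal μ lam := by
  have hsum (v : Fin N → ℂ) : ∑ j, (v j - z) = ∑ j, v j - N * z := by simp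
  have hsum_sq (v : Fin N → ℂ) : ∑ j, (v j - z) ^ 2 =
      ∑ j, v j ^ 2 - 2 * z * ∑ j, v j + N * z ^ 2 := by
    simp only [sub_sq, sum_add_distrib, sum_sub_distrib, mul_sum]
    simp [mul_right_comm]
  have hsum_cube (v : Fin N → ℂ) : ∑ j, (v j - z) ^ 3 =
      ∑ j, v j ^ 3 - 3 * z * ∑ j, v j ^ 2 + 3 * z ^ 2 * ∑ j, v j - N * z ^ 3 := by
    have h (x : ℂ) : (x - z) ^ 3 = x ^ 3 - 3 * z * x ^ 2 + 3 * z ^ 2 * x - z ^ 3 := by ring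
    simp [h, sum_add_distrib, sum_sub_distrib, mul_sum]
  simp only [Jcal, hsum, hsum_sq, hsum_cube]
  ring

lemma Jcal_idealString (μ : Fin N → ℂ) :
    Jcal μ (idealString c z) =
      (∑ m, (μ m - z)) ^ 4 - 4 * (∑ m, (μ m - z)) * (∑ m, (μ m - z) ^ 3) +
        3 * (∑ m, (μ m - z) ^ 2 + c ^ 2 / 12 * N * ((N : ℂ) ^ 2 - 1)) ^ 2 := by
  have hcentre : (fun j : Fin N ↦ idealString c z j - z) = idealString c 0 := by
    ext j
    simp only [idealString]
    ring
  have hodd := sum_idealString_pow_of_odd (N := N) c odd_one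
  simp only [pow_one] at hodd
  rw [← Jcal_sub_const z, hcentre, Jcal, hodd, sum_idealString_pow_of_odd c (p := 3) (by decide),
    sum_idealString_sq]
  ring

end PowerSums

section Limits

lemma gap_mul_Kk {n : ℕ} {c : ℂ} {lam : Fin (n + 1) → ℂ} {j : Fin n}
    (h : (lam j.castSucc - lam j.succ) ^ 2 + c ^ 2 ≠ 0) :
    gap c lam j * Kk c (lam j.castSucc) (lam j.succ) =
      2 * c / (lam j.castSucc - lam j.succ - I * c) := by
  rw [sub_sq_comm, sub_sq_add_sq] at h
  rw [Kk, sub_sq_comm, sub_sq_add_sq, gap, mul_div_assoc',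
    mul_div_mul_left _ _ (left_ne_zero_of_mul h)]

open Filter Topology

lemma tendsto_Xi {α : Type*} {l : Filter α} {N : ℕ} (μ : Fin N → ℂ) {lam : α → Fin N → ℂ}
    {v : Fin N → ℂ} (hlam : Tendsto lam l (𝓝 v)) (hv : Function.Injective v) (j : Fin N) :
    Tendsto (fun t ↦ Xi μ (lam t) j) l (𝓝 (Xi μ v j)) := by
  have hcont : ContinuousAt (fun v ↦ Xi μ v j) v :=
    ContinuousAt.div (Continuous.continuousAt (by fun_prop)) (Continuous.continuousAt (by fun_prop))
      (prod_ne_zero_iff.2 fun m hm ↦ sub_ne_zero.2 (hv.ne (ne_of_mem_erase hm)))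
  exact hcont.tendsto.comp hlam

lemma tendsto_Kk {α : Type*} {l : Filter α} (c : ℂ) {x y : α → ℂ} {a b : ℂ}
    (hx : Tendsto x l (𝓝 a)) (hy : Tendsto y l (𝓝 b)) (h : (a - b) ^ 2 + c ^ 2 ≠ 0) :
    Tendsto (fun t ↦ Kk c (x t) (y t)) l (𝓝 (Kk c a b)) :=
  tendsto_const_nhds.div (((hx.sub hy).pow 2).add tendsto_const_nhds) h

lemma tendsto_Jcal {α : Type*} {l : Filter α} {N : ℕ} (μ : Fin N → ℂ) {lam : α → Fin N → ℂ}
    {v : Fin N → ℂ} (hlam : Tendsto lam l (𝓝 v)) :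
    Tendsto (fun t ↦ Jcal μ (lam t)) l (𝓝 (Jcal μ v)) := by
  have hcont : Continuous (Jcal μ) := by unfold Jcal; fun_prop
  exact (hcont.tendsto v).comp hlam

variable {α : Type*} {l : Filter α} {n : ℕ} {c z : ℂ} (hc : c ≠ 0) (μ : Fin (n + 1) → ℂ)
  {lp ls : ℂ} {lam : α → Fin (n + 1) → ℂ} (hlam : Tendsto lam l (𝓝 (idealString c z)))
include hc hlam

lemma tendsto_regularFactor (hμ : ∀ k j : Fin (n + 1), μ k ≠ idealString c z j) :
    Tendsto (fun t ↦ regularFactor c μ (lam t)) l (𝓝 (regularFactor c μ (idealString c z))) := by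
  have hinj := idealString_injective (N := n + 1) hc z
  have hoff : Continuous (offBondProd (n := n) c) := by unfold offBondProd; fun_prop
  have hinv : Tendsto (fun t ↦ ∏ j, ∏ k, (lam t j - μ k)⁻¹) l
      (𝓝 (∏ j, ∏ k, (idealString c z j - μ k)⁻¹)) :=
    tendsto_finsetProd _ fun j _ ↦ tendsto_finsetProd _ fun k _ ↦
      ((tendsto_pi_nhds.1 hlam j).sub_const (μ k)).inv₀ (sub_ne_zero.2 (hμ k j).symm)
  exact ((((hoff.tendsto _).comp hlam).mul hinv).mul_const I).div
    (tendsto_Xi μ hlam hinj _) (Xi_ne_zero hinj hμ _)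

omit hc in
lemma tendsto_gap (j : Fin n) : Tendsto (fun t ↦ gap c (lam t) j) l (𝓝 0) := by
  have hcont : Continuous fun v ↦ gap c v j := by unfold gap; fun_prop
  simpa only [gap_idealString, Function.comp_def] using (hcont.tendsto _).comp hlam

lemma tendsto_gap_mul_Kk (hself : ∀ᶠ t in l, ∀ j k, (lam t j - lam t k) ^ 2 + c ^ 2 ≠ 0)
    {j : Fin n} {i k : Fin (n + 1)} (hi : i ≤ j.castSucc) (hk : j.castSucc < k) :
    Tendsto (fun t ↦ gap c (lam t) j * Kk c (lam t i) (lam t k)) l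
      (𝓝 (if i = j.castSucc ∧ k = j.succ then I else 0)) := by
  have hcoord := tendsto_pi_nhds.1 hlam
  split_ifs with hbond
  · obtain ⟨rfl, rfl⟩ := hbond
    have hden : idealString c z j.castSucc - idealString c z j.succ - I * c = -(2 * I * c) := by
      have hgap := gap_idealString c z j
      rw [gap] at hgap
      linear_combination hgap
    have hden_ne : -(2 * I * c) ≠ 0 := by simp [hc]
    have hvalue : 2 * c / -(2 * I * c) = I := by
      rw [div_eq_iff hden_ne]
      linear_combination 2 * c * I_sq
    have hlim := (tendsto_const_nhds (x := 2 * c)).div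
      (((hcoord j.castSucc).sub (hcoord j.succ)).sub_const (I * c)) (hden ▸ hden_ne)
    rw [hden, hvalue] at hlim
    exact hlim.congr' (hself.mono fun t ht ↦ (gap_mul_Kk (ht _ _)).symm)
  · have hregular : (idealString c z i - idealString c z k) ^ 2 + c ^ 2 ≠ 0 :=
      idealString_kernel_ne_zero hc z (by grind) (by grind)
    have hlim := (tendsto_gap hlam j).mul (tendsto_Kk c (hcoord i) (hcoord k) hregular)
    rwa [zero_mul] at hlim

lemma tendsto_gap_mul_kernelMat {i k : Fin (n + 1)} {j : Fin n} {a : ℂ}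
    (hp : (lp - idealString c z k) ^ 2 + c ^ 2 ≠ 0) (hs : (ls - idealString c z i) ^ 2 + c ^ 2 ≠ 0)
    (h : Tendsto (fun t ↦ gap c (lam t) j * Kk c (lam t i) (lam t k)) l (𝓝 a)) :
    Tendsto (fun t ↦ gap c (lam t) j * kernelMat c μ (lam t) lp ls i k) l
      (𝓝 (I * Xi μ (idealString c z) i * a)) := by
  have hcoord := tendsto_pi_nhds.1 hlam
  have hXi := tendsto_Xi μ hlam (idealString_injective hc z) i
  have hKp := tendsto_Kk c tendsto_const_nhds (hcoord k) hp
  have hKs := tendsto_Kk c tendsto_const_nhds (hcoord i) hs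
  have hlim := (hXi.const_mul I).mul (h.sub ((tendsto_gap hlam j).mul (hKp.mul hKs)))
  rw [zero_mul, sub_zero] at hlim
  exact hlim.congr fun t ↦ by rw [kernelMat, of_apply]; ring

variable (hself : ∀ᶠ t in l, ∀ j k, (lam t j - lam t k) ^ 2 + c ^ 2 ≠ 0)
  (hp : ∀ j : Fin (n + 1), (lp - idealString c z j) ^ 2 + c ^ 2 ≠ 0)
  (hs : ∀ j : Fin (n + 1), (ls - idealString c z j) ^ 2 + c ^ 2 ≠ 0)
include hself hp hs

lemma tendsto_gap_mul_sum_Iic_kernelMat {j : Fin n} {k : Fin (n + 1)} (hk : j.castSucc < k) :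
    Tendsto (fun t ↦ gap c (lam t) j * ∑ i ∈ Iic j.castSucc, kernelMat c μ (lam t) lp ls i k) l
      (𝓝 (if k = j.succ then -Xi μ (idealString c z) j.castSucc else 0)) := by
  have hterm : ∀ i ∈ Iic j.castSucc, Tendsto
      (fun t ↦ gap c (lam t) j * kernelMat c μ (lam t) lp ls i k) l
      (𝓝 (if i = j.castSucc then if k = j.succ then -Xi μ (idealString c z) i else 0 else 0)) := by
    intro i hi
    have hlim := tendsto_gap_mul_kernelMat hc μ hlam (hp k) (hs i)
      (tendsto_gap_mul_Kk hc hlam hself (mem_Iic.1 hi) hk)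
    convert hlim using 2
    split_ifs <;> grind [I_mul_I]
  simpa only [mul_sum, sum_ite_eq', mem_Iic, le_refl, if_true] using tendsto_finsetSum _ hterm

lemma tendsto_gap_mul_sum_Ioi_kernelMat {j : Fin n} {k : Fin (n + 1)} (hk : k ≤ j.castSucc) :
    Tendsto (fun t ↦ gap c (lam t) j * ∑ i ∈ Ioi j.castSucc, kernelMat c μ (lam t) lp ls i k) l
      (𝓝 (if k = j.castSucc then -Xi μ (idealString c z) j.succ else 0)) := by
  have hterm : ∀ i ∈ Ioi j.castSucc, Tendsto
      (fun t ↦ gap c (lam t) j * kernelMat c μ (lam t) lp ls i k) l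
      (𝓝 (if i = j.succ then if k = j.castSucc then -Xi μ (idealString c z) i else 0 else 0)) := by
    intro i hi
    have hKk := tendsto_gap_mul_Kk hc hlam hself hk (mem_Ioi.1 hi)
    simp only [Kk_symm c (lam _ k)] at hKk
    have hlim := tendsto_gap_mul_kernelMat hc μ hlam (hp k) (hs i) hKk
    convert hlim using 2
    split_ifs <;> grind [I_mul_I]
  have hmem : j.succ ∈ Ioi j.castSucc := mem_Ioi.2 j.castSucc_lt_succ
  simpa only [mul_sum, sum_ite_eq', hmem, if_true] using tendsto_finsetSum _ hterm

lemma tendsto_reducedMat_upper {j : Fin n} {k : Fin (n + 1)} (hk : j.castSucc < k)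
    (hk_last : k ≠ Fin.last n) :
    Tendsto (fun t ↦ reducedMat c μ (lam t) lp ls j.castSucc k) l
      (𝓝 (if k = j.succ then -Xi μ (idealString c z) j.castSucc else 0)) := by
  refine (tendsto_gap_mul_sum_Iic_kernelMat hc μ hlam hself hp hs hk).congr fun t ↦ ?_
  rw [reducedMat, of_apply, Fin.snoc_castSucc]
  exact congrArg _ (sum_congr rfl fun i hi ↦
    (borderedMat_of_ne ((mem_Iic.1 hi).trans_lt hk).ne hk_last).symm)

lemma tendsto_reducedMat_lower {j : Fin n} {k : Fin (n + 1)} (hk : k ≤ j.castSucc) :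
    Tendsto (fun t ↦ reducedMat c μ (lam t) lp ls j.castSucc k) l
      (𝓝 (if k = j.castSucc then Xi μ (idealString c z) j.succ else 0)) := by
  have hinj := idealString_injective (N := n + 1) hc z
  have hcoord := tendsto_pi_nhds.1 hlam
  have hk_last : k ≠ Fin.last n := (hk.trans_lt j.castSucc_lt_last).ne
  have htotal :
      Tendsto (fun t ↦ gap c (lam t) j * ∑ i, borderedMat c μ (lam t) lp ls i k) l (𝓝 0) := by
    have hsum := tendsto_finsetSum univ fun i _ ↦
      (tendsto_Xi μ hlam hinj i).mul (tendsto_Kk c tendsto_const_nhds (hcoord i) (hs i))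
    have hlim := (tendsto_gap hlam j).mul
      (hsum.mul ((tendsto_Kk c tendsto_const_nhds (hcoord k) (hp k)).const_mul (-I)))
    rw [zero_mul] at hlim
    refine hlim.congr' ?_
    filter_upwards [hself, hlam.eventually (eventually_nhds_injective hinj)] with t ht htinj
    rw [sum_borderedMat_apply htinj ht, lastRow_of_ne hk_last]
  have hlim := htotal.sub (tendsto_gap_mul_sum_Ioi_kernelMat hc μ hlam hself hp hs hk)
  convert hlim.congr fun t ↦ ?_ using 2
  · split_ifs <;> simp
  · have hsplit : ∑ i, borderedMat c μ (lam t) lp ls i k =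
        ∑ i ∈ Iic j.castSucc, borderedMat c μ (lam t) lp ls i k +
          ∑ i ∈ Ioi j.castSucc, kernelMat c μ (lam t) lp ls i k := by
      have hcompl : (Iic j.castSucc)ᶜ = Ioi j.castSucc := by ext; simp
      rw [← sum_add_sum_compl (Iic j.castSucc), hcompl]
      exact congrArg _ (sum_congr rfl fun i hi ↦
        borderedMat_of_ne (hk.trans_lt (mem_Ioi.1 hi)).ne' hk_last)
    rw [reducedMat, of_apply, Fin.snoc_castSucc, hsplit]
    ring

omit hself hp in
lemma tendsto_reducedMat_last_column (j : Fin n) :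
    Tendsto (fun t ↦ reducedMat c μ (lam t) lp ls j.castSucc (Fin.last n)) l (𝓝 0) := by
  have hsum := tendsto_finsetSum (Iic j.castSucc) fun i _ ↦
    (tendsto_Xi μ hlam (idealString_injective hc z) i).mul
      (tendsto_Kk c tendsto_const_nhds (tendsto_pi_nhds.1 hlam i) (hs i))
  have hlim := (tendsto_gap hlam j).mul hsum
  rw [zero_mul] at hlim
  exact hlim.congr fun t ↦ by simp only [reducedMat, of_apply, Fin.snoc_castSucc, borderedMat_last]

omit hc hself hs in
lemma tendsto_lastRow : Tendsto (fun t ↦ lastRow c (lam t) lp) l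
    (𝓝 (lastRow c (idealString c z) lp)) := by
  refine tendsto_pi_nhds.2 fun k ↦ ?_
  obtain rfl | hk := eq_or_ne k (Fin.last n)
  · simp only [lastRow_last, tendsto_const_nhds]
  · simp only [lastRow_of_ne hk]
    exact (tendsto_Kk c tendsto_const_nhds (tendsto_pi_nhds.1 hlam k) (hp k)).const_mul _

lemma tendsto_reducedMat : Tendsto (fun t ↦ reducedMat c μ (lam t) lp ls) l
    (𝓝 (limitMat c z μ lp)) := by
  refine tendsto_pi_nhds.2 fun j ↦ tendsto_pi_nhds.2 fun k ↦ ?_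
  induction j using Fin.lastCases with
  | last =>
    simpa only [reducedMat, limitMat, of_apply, Fin.snoc_last] using
      tendsto_pi_nhds.1 (tendsto_lastRow hlam hp) k
  | cast j =>
    rw [limitMat, of_apply, Fin.snoc_castSucc]
    obtain rfl | hk_last := eq_or_ne k (Fin.last n)
    · simpa only [if_true] using tendsto_reducedMat_last_column hc μ hlam hs j
    rw [if_neg hk_last]
    obtain hk | hk := le_or_gt k j.castSucc
    · rw [if_neg (c := k = j.succ) (by grind)]
      exact tendsto_reducedMat_lower hc μ hlam hself hp hs hk
    · rw [if_neg hk.ne']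
      exact tendsto_reducedMat_upper hc μ hlam hself hp hs hk hk_last

lemma tendsto_det_reducedMat : Tendsto (fun t ↦ (reducedMat c μ (lam t) lp ls).det) l
    (𝓝 (∏ j : Fin n, Xi μ (idealString c z) j.succ)) := by
  rw [← det_limitMat c z μ lp]
  exact (continuous_id.matrix_det.tendsto _).comp (tendsto_reducedMat hc μ hlam hself hp hs)

end Limits

/-- The conditions on the rapidities under which no denominator of the determinant formula `Fff`
built from the `V^±` or from the kernel at two of the `λ_j` vanishes. -/
structure IsRegular {N : ℕ} (c : ℂ) (μ lam : Fin N → ℂ) (lp ls : ℂ) : Prop where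
  kernel_ne_zero : ∀ j k, (lam j - lam k) ^ 2 + c ^ 2 ≠ 0
  Vp_ne_Vm : ∀ j, Vp c μ lam (lam j) ≠ Vm c μ lam (lam j)
  Vp_ne_Vm_p : Vp c μ lam lp ≠ Vm c μ lam lp
  Vp_ne_Vm_s : Vp c μ lam ls ≠ Vm c μ lam ls

end LL

section StringLimit

open Filter Topology

theorem F_string_limit_general {α : Type*} {l : Filter α} {N : ℕ} (hN : 1 ≤ N) {c z : ℂ}
    (hc : c ≠ 0) {μ : Fin N → ℂ} (hμ : ∀ k j : Fin N, μ k ≠ idealString c z j) {lp ls : ℂ}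
    (hp : ∀ j : Fin N, (lp - idealString c z j) ^ 2 + c ^ 2 ≠ 0)
    (hs : ∀ j : Fin N, (ls - idealString c z j) ^ 2 + c ^ 2 ≠ 0) {lam : α → Fin N → ℂ}
    (hlam : Tendsto lam l (𝓝 (idealString c z)))
    (hreg : ∀ᶠ t in l, IsRegular c μ (lam t) lp ls) :
    Tendsto (fun t ↦ Fff c μ (lam t) lp ls) l
      (𝓝 ((-1) ^ N * (c ^ (2 * (N - 1)) / 6) *
        ((∑ m, (μ m - z)) ^ 4 - 4 * (∑ m, (μ m - z)) * (∑ m, (μ m - z) ^ 3) +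
          3 * (∑ m, (μ m - z) ^ 2 + c ^ 2 / 12 * N * ((N : ℂ) ^ 2 - 1)) ^ 2) *
        N * ((N - 1).factorial : ℂ) ^ 2 /
        ∏ m, ((μ m - z) ^ 2 + c ^ 2 / 4 * ((N : ℂ) - 1) ^ 2))) := by
  obtain ⟨n, rfl⟩ := Nat.exists_eq_add_of_le' hN
  have hself : ∀ᶠ t in l, ∀ j k, (lam t j - lam t k) ^ 2 + c ^ 2 ≠ 0 :=
    hreg.mono fun t ht ↦ ht.kernel_ne_zero
  have hcoord := tendsto_pi_nhds.1 hlam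
  have hproduct := (((tendsto_Jcal μ hlam).div_const (6 * c)).const_mul ((-1) ^ (n + 1))).mul
    (tendsto_regularFactor hc μ hlam hμ) |>.mul (tendsto_det_reducedMat hc μ hlam hself hp hs)
  have hμ_ev : ∀ᶠ t in l, ∀ k j, μ k ≠ lam t j := by
    simp only [eventually_all]
    exact fun k j ↦ ((hcoord j).eventually_ne (hμ k j).symm).mono fun _ h ↦ h.symm
  have hkernel_ev {x : ℂ} (hx : ∀ j, (x - idealString c z j) ^ 2 + c ^ 2 ≠ 0) :
      ∀ᶠ t in l, ∀ j, (x - lam t j) ^ 2 + c ^ 2 ≠ 0 :=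
    eventually_all.2 fun j ↦ ((((hcoord j).const_sub x).pow 2).add_const _).eventually_ne (hx j)
  have hFff := hproduct.congr' (f₂ := fun t ↦ Fff c μ (lam t) lp ls) <| by
    filter_upwards [hlam.eventually (eventually_nhds_injective (idealString_injective hc z)),
      hμ_ev, hkernel_ev hp, hkernel_ev hs, hreg] with t hinj hμt hpt hst ht
    exact (Fff_eq_regularFactor_mul_det hinj hμt ht.kernel_ne_zero hpt hst ht.Vp_ne_Vm
      ht.Vp_ne_Vm_p ht.Vp_ne_Vm_s).symm
  convert hFff using 2
  rw [mul_assoc _ (regularFactor _ _ _), regularFactor_idealString hc hμ, Jcal_idealString]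
  simp only [Nat.add_sub_cancel, Nat.cast_succ, add_sub_cancel_right, pow_succ c (2 * n)]
  field_simp

end StringLimit

/-- Attractive-regime (vanishing string deviation) limit of the determinant formula `F`
for the form factor of `(Ψ†(0))²Ψ²(0)` between the `N`-string ground state
(`c = −c̄ < 0`) and a state with rapidities `μ₁,…,μ_N`. -/
theorem F_string_limit {N : ℕ} (hN : 1 ≤ N) (cb : ℝ) (hcb : 0 < cb)
    (c : ℂ) (hcdef : c = -(cb : ℂ))
    (μ : Fin N → ℂ)
    (hmu1 : ∀ m : Fin N, μ m ^ 2 + (cb : ℂ) ^ 2 / 4 * ((N : ℂ) - 1) ^ 2 ≠ 0)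
    (hmu2 : ∀ k j : Fin N, μ k ≠ stringRap cb N 0 j)
    (lp ls : ℂ)
    (hp1 : ∀ j, (lp - stringRap cb N 0 j) ^ 2 + c ^ 2 ≠ 0)
    (hs1 : ∀ j, (ls - stringRap cb N 0 j) ^ 2 + c ^ 2 ≠ 0) :
    Filter.Tendsto
      (fun δ : Fin N → ℂ => Fff c μ (stringRap cb N δ) lp ls)
      (nhdsWithin 0
        {δ : Fin N → ℂ |
          Function.Injective (stringRap cb N δ) ∧
          (∀ k j, μ k ≠ stringRap cb N δ j) ∧
          (∀ j k, stringRap cb N δ j - stringRap cb N δ k + I * c ≠ 0 ∧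
            stringRap cb N δ j - stringRap cb N δ k - I * c ≠ 0) ∧
          (∀ j, Vp c μ (stringRap cb N δ) (stringRap cb N δ j) ≠
            Vm c μ (stringRap cb N δ) (stringRap cb N δ j)) ∧
          Vp c μ (stringRap cb N δ) lp ≠ Vm c μ (stringRap cb N δ) lp ∧
          Vp c μ (stringRap cb N δ) ls ≠ Vm c μ (stringRap cb N δ) ls ∧
          (∀ j, (lp - stringRap cb N δ j) ^ 2 + c ^ 2 ≠ 0) ∧
          (∀ j, (ls - stringRap cb N δ j) ^ 2 + c ^ 2 ≠ 0)})
      (nhds ((-1 : ℂ) ^ N * (c ^ (2 * (N - 1)) / 6) *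
        ((∑ m, μ m) ^ 4 - 4 * (∑ m, μ m) * (∑ m, μ m ^ 3) +
          3 * (∑ m, μ m ^ 2 + (cb : ℂ) ^ 2 / 12 * (N : ℂ) * ((N : ℂ) ^ 2 - 1)) ^ 2) *
        (N : ℂ) * (((N - 1).factorial : ℂ)) ^ 2 /
        ∏ m : Fin N, (μ m ^ 2 + (cb : ℂ) ^ 2 / 4 * ((N : ℂ) - 1) ^ 2))) := by
  subst hcdef
  simp only [stringRap_zero] at hmu2 hp1 hs1
  convert F_string_limit_general hN (neg_ne_zero.2 (ofReal_ne_zero.2 hcb.ne')) hmu2 hp1 hs1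
    (tendsto_stringRap cb N _) ?_ using 2
  · simp only [sub_zero, neg_sq]
  · filter_upwards [eventually_mem_nhdsWithin] with δ ⟨_, _, hself, hV, hVp, hVs, _, _⟩
    exact ⟨fun j k ↦ sub_sq_add_sq _ _ _ ▸ mul_ne_zero (hself k j).1 (hself k j).2, hV, hVp, hVs⟩
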